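/- Let 𝒜 be a unital C*-algebra, 𝒮 ⊆ 𝒜 an operator system, and φ: 𝒮 → M_n(ℂ) a linear map. Then φ is decomposable if and only if its dual functional s_φ: M_n(𝒮) → ℂ satisfies s_φ(S) ≥ 0 for every S ∈ J_n(𝒮). -/

import Mathlib

/-!
A functional on `Mₙ(S)` is nonnegative on the positive matrices exactly when the map `S → Mₙ(ℂ)`
it is dual to is completely positive (`dualFunc_nonneg_of_isCPMap`, `isCPMap_mapOfFunctional`), and
passing to the transpose gives the same for co-cp maps and the cone of matrices with positive
partial transpose. So decomposability of `φ` says that `s_φ` is a sum of two functionals, each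
nonnegative on one of two cones whose intersection is `Jₙ(S)`; this gives the forward implication.

For the converse, the unit is an order unit for both cones, so the Riesz extension theorem, applied
to the product of the cones in `Mₙ(S) × Mₙ(S)` and to `s_φ` on the diagonal, splits a functional
nonnegative on the intersection into two such functionals (`exists_split`). To avoid the real
subspace of self-adjoint matrices, the cones used are those of matrices with positive real part
(`accretiveCone`), and the functionals are compared through their real parts. Positivity in `Mₙ(A)`
is handled through the C*-algebra `CStarMatrix`.
-/

open scoped ComplexOrder
open Matrix

/-- An element of a star ring is *positive* if it equals `star b * b` for some `b`;
in a (matrix algebra over a) C*-algebra this is the usual notion of positivity. -/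
def IsPosElem {R : Type*} [Ring R] [StarRing R] (x : R) : Prop :=
  ∃ b : R, x = star b * b

variable {A : Type*} [NormedRing A] [StarRing A] [CStarRing A]
  [CompleteSpace A] [NormedAlgebra ℂ A] [StarModule ℂ A]

/-- The canonical image in `Mₘ(𝒜)` of a matrix with entries in the operator system `S`. -/
def matCoe {S : Submodule ℂ A} {m : ℕ} (s : Matrix (Fin m) (Fin m) S) :
    Matrix (Fin m) (Fin m) A :=
  Matrix.of fun j k => (s j k : A)

/-- `J_m(S)`: matrices over `S` which are positive in `Mₘ(𝒜)` together with their
partial transpose. -/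
def memJ {S : Submodule ℂ A} {m : ℕ} (s : Matrix (Fin m) (Fin m) S) : Prop :=
  IsPosElem (matCoe s) ∧ IsPosElem (matCoe s)ᵀ

/-- A map `φ : S → Mₙ(ℂ)` is positive if it sends positive elements of `𝒜` lying in `S`
to positive semidefinite matrices. -/
def IsPosMap {S : Submodule ℂ A} {n : ℕ}
    (φ : S →ₗ[ℂ] Matrix (Fin n) (Fin n) ℂ) : Prop :=
  ∀ s : S, IsPosElem (s : A) → IsPosElem (φ s)

/-- Complete positivity of `φ : S → Mₙ(ℂ)`: every positive matrix over `S` is sent,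
entrywise, to a positive element of `Mₘ(Mₙ(ℂ))`. -/
def IsCPMap {S : Submodule ℂ A} {n : ℕ}
    (φ : S →ₗ[ℂ] Matrix (Fin n) (Fin n) ℂ) : Prop :=
  ∀ (m : ℕ) (s : Matrix (Fin m) (Fin m) S),
    IsPosElem (matCoe s) → IsPosElem (s.map ⇑φ)

/-- `φ` is co-completely positive if `transpose ∘ φ` is completely positive. -/
def IsCoCPMap {S : Submodule ℂ A} {n : ℕ}
    (φ : S →ₗ[ℂ] Matrix (Fin n) (Fin n) ℂ) : Prop :=
  ∀ (m : ℕ) (s : Matrix (Fin m) (Fin m) S),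
    IsPosElem (matCoe s) → IsPosElem (s.map fun a => (φ a)ᵀ)

/-- `φ` is decomposable if it is the sum of a completely positive and a
co-completely positive map. -/
noncomputable def IsDecomposable {S : Submodule ℂ A} {n : ℕ}
    (φ : S →ₗ[ℂ] Matrix (Fin n) (Fin n) ℂ) : Prop :=
  ∃ ψ η : S →ₗ[ℂ] Matrix (Fin n) (Fin n) ℂ,
    IsCPMap ψ ∧ IsCoCPMap η ∧ φ = ψ + η

/-- The dual functional `s_φ` on `Mₙ(S)`, `s_φ([x_{ij}]) = ∑_{i,j} (φ(x_{ij}))_{ij}`. -/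
noncomputable def dualFunc {S : Submodule ℂ A} {n : ℕ}
    (φ : S →ₗ[ℂ] Matrix (Fin n) (Fin n) ℂ)
    (x : Matrix (Fin n) (Fin n) S) : ℂ :=
  ∑ i, ∑ j, φ (x i j) i j

/-- The cone `S⁺ ⊗ Mₙ(ℂ)⁺` inside `Mₙ(𝒜)`: finite sums `∑ sₗ ⊗ xₗ` with `sₗ ∈ S`
positive in `𝒜` and `xₗ` positive semidefinite. -/
def posCone (S : Submodule ℂ A) (n : ℕ) : Set (Matrix (Fin n) (Fin n) A) :=
  { T | ∃ (k : ℕ) (s : Fin k → A) (x : Fin k → Matrix (Fin n) (Fin n) ℂ),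
      (∀ l, s l ∈ S ∧ IsPosElem (s l)) ∧ (∀ l, IsPosElem (x l)) ∧
      T = ∑ l, Matrix.of fun p q => x l p q • s l }

set_option linter.unusedSectionVars false

/-! ### Positive elements of `Mₙ(A)` -/

section CStar
variable {B : Type*} [CStarAlgebra B]

lemma isPosElem_add_of_cstar {x y : B} (hx : IsPosElem x) (hy : IsPosElem y) :
    IsPosElem (x + y) := by
  let _ := CStarAlgebra.spectralOrder B
  have := CStarAlgebra.spectralOrderedRing B
  exact CStarAlgebra.nonneg_iff_eq_star_mul_self.1
    (add_nonneg (CStarAlgebra.nonneg_iff_eq_star_mul_self.2 hx)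
      (CStarAlgebra.nonneg_iff_eq_star_mul_self.2 hy))

lemma isPosElem_add_smul_one_of_cstar {x : B} (hx : IsSelfAdjoint x) :
    ∃ c₀ : ℝ, ∀ c : ℝ, c₀ ≤ c → IsPosElem (x + (c : ℂ) • (1 : B)) := by
  let _ := CStarAlgebra.spectralOrder B
  have := CStarAlgebra.spectralOrderedRing B
  refine ⟨‖x‖, fun c hc => CStarAlgebra.nonneg_iff_eq_star_mul_self.1 ?_⟩
  have h1 := hx.neg_algebraMap_norm_le_self
  have h2 : algebraMap ℝ B ‖x‖ ≤ algebraMap ℝ B c := algebraMap_mono B hc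
  have h3 : (c : ℂ) • (1 : B) = algebraMap ℝ B c := by
    rw [Algebra.algebraMap_eq_smul_one]; simp
  rw [h3]
  have := neg_le_iff_add_nonneg.1 h1
  exact this.trans (add_le_add le_rfl h2)

end CStar

/-- The given data make `A` a C*-algebra in the bundled sense of Mathlib. -/
@[reducible] def cstarOfData (A : Type*) [NormedRing A] [StarRing A] [CStarRing A]
    [CompleteSpace A] [NormedAlgebra ℂ A] [StarModule ℂ A] : CStarAlgebra A where

lemma isPosElem_add {n : ℕ} {x y : Matrix (Fin n) (Fin n) A} (hx : IsPosElem x)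
    (hy : IsPosElem y) : IsPosElem (x + y) := by
  let _ := cstarOfData A
  let _ := CStarAlgebra.spectralOrder A
  have := CStarAlgebra.spectralOrderedRing A
  exact isPosElem_add_of_cstar (B := CStarMatrix (Fin n) (Fin n) A) hx hy

lemma isPosElem_add_smul_one {n : ℕ} {x : Matrix (Fin n) (Fin n) A} (hx : star x = x) :
    ∃ c₀ : ℝ, ∀ c : ℝ, c₀ ≤ c →
      IsPosElem (x + (c : ℂ) • (1 : Matrix (Fin n) (Fin n) A)) := by
  let _ := cstarOfData A
  let _ := CStarAlgebra.spectralOrder A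
  have := CStarAlgebra.spectralOrderedRing A
  exact isPosElem_add_smul_one_of_cstar (B := CStarMatrix (Fin n) (Fin n) A) hx

lemma isPosElem_smul {n : ℕ} {x : Matrix (Fin n) (Fin n) A} (hx : IsPosElem x) {r : ℝ}
    (hr : 0 ≤ r) : IsPosElem (r • x) := by
  obtain ⟨b, rfl⟩ := hx
  refine ⟨((√r : ℝ) : ℂ) • b, ?_⟩
  rw [star_smul, smul_mul_smul_comm]
  simp only [RCLike.star_def, Complex.conj_ofReal, ← Complex.ofReal_mul, Real.mul_self_sqrt hr]
  simp

/-- For rectangular `V` the matrix `Vᴴ V` is a sum, over the rows of `V`, of elements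
`star b * b` with `b` square. -/
lemma isPosElem_conjTranspose_mul_self {m n : ℕ} (V : Matrix (Fin m) (Fin n) A) :
    IsPosElem (Vᴴ * V) := by
  rcases n with _ | n
  · exact ⟨0, Subsingleton.elim _ _⟩
  have h0 : IsPosElem (0 : Matrix (Fin (n + 1)) (Fin (n + 1)) A) := ⟨0, by simp⟩
  have key : Vᴴ * V = ∑ k, star (Matrix.of fun (i : Fin (n + 1)) j => if i = 0 then V k j else 0) *
      (Matrix.of fun (i : Fin (n + 1)) j => if i = 0 then V k j else 0) := by
    ext i j
    simp [Matrix.mul_apply, Matrix.sum_apply, Matrix.star_apply, apply_ite star]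
  rw [key]
  refine Finset.sum_induction _ IsPosElem (fun _ _ => isPosElem_add) h0 fun k _ => ⟨_, rfl⟩

/-! ### Splitting functionals over two cones -/

/-- If a complex functional `f` has nonnegative real part on `C₁ ∩ C₂` and `e` is an order unit
for both cones, then `f = g₁ + g₂` with `gᵢ` of nonnegative real part on `Cᵢ`. This is the Riesz
extension theorem for `C₁ × C₂ ⊆ F × F` and the functional `(x, x) ↦ re (f x)` on the diagonal. -/
lemma exists_split {F : Type*} [AddCommGroup F] [Module ℂ F] [Module ℝ F] [IsScalarTower ℝ ℂ F]
    (C₁ C₂ : PointedCone ℝ F) (f : F →ₗ[ℂ] ℂ) (e : F)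
    (he : ∀ y₁ y₂ : F, ∃ c : ℝ, c • e + y₁ ∈ C₁ ∧ c • e + y₂ ∈ C₂)
    (hf : ∀ x, x ∈ C₁ → x ∈ C₂ → 0 ≤ (f x).re) :
    ∃ g₁ g₂ : F →ₗ[ℂ] ℂ, f = g₁ + g₂ ∧ (∀ x ∈ C₁, 0 ≤ (g₁ x).re) ∧
      (∀ x ∈ C₂, 0 ≤ (g₂ x).re) := by
  let fr : F →ₗ[ℝ] ℝ := Complex.reLm ∘ₗ f.restrictScalars ℝ
  let p : (F × F) →ₗ.[ℝ] ℝ :=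
    { domain := LinearMap.range (LinearMap.id.prod LinearMap.id : F →ₗ[ℝ] F × F)
      toFun := fr ∘ₗ LinearMap.fst ℝ F F ∘ₗ Submodule.subtype _ }
  obtain ⟨g, hg, hpos⟩ := riesz_extension (Submodule.prod C₁ C₂) p
    (by
      rintro ⟨_, x, rfl⟩ ⟨h1, h2⟩
      exact hf x h1 h2)
    (by
      rintro ⟨y₁, y₂⟩
      obtain ⟨c, h1, h2⟩ := he y₁ y₂
      exact ⟨⟨_, c • e, rfl⟩, h1, h2⟩)
  have hg' : ∀ x : F, g (x, 0) + g (0, x) = (f x).re := by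
    intro x
    rw [← map_add]
    have := hg ⟨(x, x), x, rfl⟩
    rw [Prod.mk_add_mk, add_zero, zero_add]
    exact this
  refine ⟨Module.Dual.extendRCLike (𝕜 := ℂ) (g ∘ₗ LinearMap.inl ℝ F F),
    Module.Dual.extendRCLike (𝕜 := ℂ) (g ∘ₗ LinearMap.inr ℝ F F), ?_, ?_, ?_⟩
  · ext x
    have h1 := hg' x
    have h2 := hg' (Complex.I • x)
    apply Complex.ext
    · simp [Module.Dual.extendRCLike_apply, ← h1]
    · simp [Module.Dual.extendRCLike_apply] at h2 ⊢
      linarith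
  · intro x hx
    have := hpos (x, 0) ⟨hx, C₂.zero_mem⟩
    simpa [Module.Dual.extendRCLike_apply] using this
  · intro x hx
    have := hpos (0, x) ⟨C₁.zero_mem, hx⟩
    simpa [Module.Dual.extendRCLike_apply] using this

/-! ### Functionals on `Mₙ(S)` and maps `S → Mₙ(ℂ)` -/

/-- The map `S → Mₙ(ℂ)`, `x ↦ [G (x ⊗ Eᵢⱼ)]`, whose dual functional is `G`. -/
noncomputable def mapOfFunctional {S : Submodule ℂ A} {n : ℕ}
    (G : Matrix (Fin n) (Fin n) S →ₗ[ℂ] ℂ) : S →ₗ[ℂ] Matrix (Fin n) (Fin n) ℂ where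
  toFun x := Matrix.of fun i j => G (Matrix.single i j x)
  map_add' x y := by ext i j; simp [Matrix.single_add]
  map_smul' c x := by ext i j; simp [← Matrix.smul_single]

/-- `dualFunc φ` as a linear functional. -/
noncomputable def dualFuncLin {S : Submodule ℂ A} {n : ℕ}
    (φ : S →ₗ[ℂ] Matrix (Fin n) (Fin n) ℂ) : Matrix (Fin n) (Fin n) S →ₗ[ℂ] ℂ where
  toFun := dualFunc φ
  map_add' x y := by simp [dualFunc, Finset.sum_add_distrib]
  map_smul' c x := by simp [dualFunc, Finset.mul_sum]

lemma mapOfFunctional_dualFuncLin {S : Submodule ℂ A} {n : ℕ}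
    (φ : S →ₗ[ℂ] Matrix (Fin n) (Fin n) ℂ) : mapOfFunctional (dualFuncLin φ) = φ := by
  ext x i j
  change dualFunc φ (Matrix.single i j x) = φ x i j
  unfold dualFunc
  rw [Finset.sum_eq_single i, Finset.sum_eq_single j]
  · simp
  · intro k _ hk; simp [Matrix.single_apply_of_col_ne _ _ hk.symm]
  · simp
  · intro k _ hk
    refine Finset.sum_eq_zero fun l _ => ?_
    simp [Matrix.single_apply_of_row_ne hk.symm]
  · simp

lemma posSemidef_of_forall_nonneg {ι : Type*} [Fintype ι] [DecidableEq ι] {M : Matrix ι ι ℂ}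
    (h : ∀ v : ι → ℂ, 0 ≤ star v ⬝ᵥ (M *ᵥ v)) : M.PosSemidef := by
  rw [← Matrix.isPositive_toEuclideanLin_iff, LinearMap.isPositive_iff_complex]
  intro x
  have hx : 0 ≤ inner ℂ (M.toEuclideanLin x) x := by
    rw [← inner_conj_symm, EuclideanSpace.inner_eq_star_dotProduct, dotProduct_comm]
    exact star_nonneg_iff.2 (h x.ofLp)
  obtain ⟨h1, h2⟩ := Complex.nonneg_iff.1 hx
  exact ⟨Complex.ext rfl h2, h1⟩

lemma isPosElem_of_comp_posSemidef {m n : ℕ} {P : Matrix (Fin m) (Fin m) (Matrix (Fin n) (Fin n) ℂ)}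
    (h : (Matrix.comp _ _ _ _ ℂ P).PosSemidef) : IsPosElem P := by
  obtain ⟨b, hb⟩ : ∃ b, Matrix.comp _ _ _ _ ℂ P = star b * b := by
    open scoped MatrixOrder Matrix.Norms.L2Operator in
    exact CStarAlgebra.nonneg_iff_eq_star_mul_self.mp h.nonneg
  refine ⟨(Matrix.comp _ _ _ _ ℂ).symm b, ?_⟩
  apply (Matrix.compRingEquiv _ _ ℂ).injective
  rw [map_mul]
  exact hb

/-- A functional on `Mₙ(S)` that is nonnegative on positive matrices comes from a completely
positive map: `⟨[ψ(sₖₗ)] v, v⟩ = G(Vᴴ s V)` for `V` the `m × n` scalar matrix with entries those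
of `v`. -/
lemma isCPMap_mapOfFunctional {S : Submodule ℂ A} {n : ℕ}
    (G : Matrix (Fin n) (Fin n) S →ₗ[ℂ] ℂ)
    (hG : ∀ x : Matrix (Fin n) (Fin n) S, IsPosElem (matCoe x) → 0 ≤ G x) :
    IsCPMap (mapOfFunctional G) := by
  intro m s ⟨b, hb⟩
  refine isPosElem_of_comp_posSemidef (posSemidef_of_forall_nonneg fun v => ?_)
  let Y : Matrix (Fin n) (Fin n) S :=
    Matrix.of fun i j => ∑ k, ∑ l, (star (v (k, i)) * v (l, j)) • s k l
  let V : Matrix (Fin m) (Fin n) A := Matrix.of fun k i => algebraMap ℂ A (v (k, i))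
  have hY : matCoe Y = (b * V)ᴴ * (b * V) := by
    rw [Matrix.conjTranspose_mul, Matrix.mul_assoc, ← Matrix.mul_assoc bᴴ, ← star_eq_conjTranspose b,
      ← hb]
    ext i j
    simp only [matCoe, Y, V, Matrix.of_apply, Matrix.mul_apply, Matrix.conjTranspose_apply,
      Submodule.coe_sum, Submodule.coe_smul, Finset.mul_sum]
    refine Finset.sum_congr rfl fun k _ => Finset.sum_congr rfl fun l _ => ?_
    rw [← algebraMap_star_comm, ← Algebra.commutes (v (l, j)), ← Algebra.smul_def, ← Algebra.smul_def, smul_smul]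
  have hval : star v ⬝ᵥ ((Matrix.comp _ _ _ _ ℂ (s.map (mapOfFunctional G))) *ᵥ v) = G Y := by
    rw [Matrix.matrix_eq_sum_single Y]
    simp only [map_sum, dotProduct, mulVec, Fintype.sum_prod_type, Finset.mul_sum]
    have h1 : ∀ i j, G (Matrix.single i j (Y i j)) =
        ∑ k, ∑ l, (star (v (k, i)) * v (l, j)) * G (Matrix.single i j (s k l)) := by
      intro i j
      have h2 : ∀ x, G (Matrix.single i j x) = mapOfFunctional G x i j := fun x => rfl
      simp [h2, Y, Matrix.sum_apply]
    simp only [h1]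
    rw [Finset.sum_comm]
    refine Finset.sum_congr rfl fun i _ => ?_
    conv_lhs => enter [2, k]; rw [Finset.sum_comm]
    rw [Finset.sum_comm]
    refine Finset.sum_congr rfl fun j _ => Finset.sum_congr rfl fun k _ =>
      Finset.sum_congr rfl fun l _ => ?_
    change star (v (k, i)) * (G (Matrix.single i j (s k l)) * v (l, j)) = _
    ring
  rw [hval]
  exact hG Y (hY ▸ isPosElem_conjTranspose_mul_self _)

lemma dualFunc_nonneg_of_isCPMap {S : Submodule ℂ A} {n : ℕ}
    {ψ : S →ₗ[ℂ] Matrix (Fin n) (Fin n) ℂ} (hψ : IsCPMap ψ) (s : Matrix (Fin n) (Fin n) S)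
    (hs : IsPosElem (matCoe s)) : 0 ≤ dualFunc ψ s := by
  obtain ⟨b, hb⟩ := hψ n s hs
  have h1 : ∀ i j, ψ (s i j) i j = ∑ k, ∑ l, star (b k i l i) * b k j l j := by
    intro i j
    have := congrFun (congrFun hb i) j
    rw [Matrix.map_apply] at this
    rw [this]
    simp [Matrix.mul_apply, Matrix.sum_apply, Matrix.star_apply]
  have h2 : dualFunc ψ s = ∑ k, ∑ l, star (∑ j, b k j l j) * (∑ j, b k j l j) := by
    simp only [dualFunc, h1, star_sum, Finset.sum_mul_sum]
    conv_lhs => enter [2, i]; rw [Finset.sum_comm]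
    rw [Finset.sum_comm]
    refine Finset.sum_congr rfl fun k _ => ?_
    conv_lhs => enter [2, i]; rw [Finset.sum_comm]
    rw [Finset.sum_comm]
  rw [h2]
  exact Finset.sum_nonneg fun k _ => Finset.sum_nonneg fun l _ => star_mul_self_nonneg _

/-! ### The cones in `Mₙ(S)` -/

/-- The matrices over `S` whose real part is positive. The unit is an order unit for this cone
in all of `Mₙ(S)`, whereas for the positive matrices it is one only in the self-adjoint part. -/
def accretiveCone (S : Submodule ℂ A) (n : ℕ) : PointedCone ℝ (Matrix (Fin n) (Fin n) S) where
  carrier := { X | IsPosElem (matCoe X + star (matCoe X)) }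
  zero_mem' := ⟨0, by ext i j; simp [matCoe, Matrix.star_apply]⟩
  add_mem' {X Y} hX hY := by
    have := isPosElem_add hX hY
    have h : matCoe (X + Y) + star (matCoe (X + Y)) =
      (matCoe X + star (matCoe X)) + (matCoe Y + star (matCoe Y)) := by
      ext i j; simp [matCoe, Matrix.star_apply]; abel
    simpa only [Set.mem_ofPred_eq, h] using this
  smul_mem' c X hX := by
    have := isPosElem_smul hX c.2
    have h : matCoe (c • X) + star (matCoe (c • X)) =
      (c : ℝ) • (matCoe X + star (matCoe X)) := by
      ext i j
      have hc : ∀ a : S, ((c • a : S) : A) = (c : ℝ) • (a : A) := fun a => rfl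
      simp only [matCoe, Matrix.star_apply, Matrix.add_apply, Matrix.smul_apply, Matrix.of_apply,
        hc, star_smul, star_trivial, smul_add]
    simpa only [Set.mem_ofPred_eq, h] using this

/-- Nonnegative real part on the accretive cone forces actual nonnegativity on positive matrices,
since `± i X` is in the cone for self-adjoint `X`. -/
lemma nonneg_of_re_nonneg_accretive {S : Submodule ℂ A} {n : ℕ}
    (G : Matrix (Fin n) (Fin n) S →ₗ[ℂ] ℂ) (hG : ∀ X ∈ accretiveCone S n, 0 ≤ (G X).re)
    (X : Matrix (Fin n) (Fin n) S) (hX : IsPosElem (matCoe X)) : 0 ≤ G X := by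
  have hsa : star (matCoe X) = matCoe X := by
    obtain ⟨b, hb⟩ := hX
    rw [hb]; simp
  have hsm : ∀ c : ℂ, matCoe (c • X) = c • matCoe X := fun c => by ext i j; simp [matCoe]
  have hre : 0 ≤ (G X).re := hG X (by
    change IsPosElem _
    rw [hsa]; exact isPosElem_add hX hX)
  have him : ∀ c : ℂ, star c = -c → 0 ≤ (c * G X).re := by
    intro c hc
    rw [← smul_eq_mul, ← map_smul]
    refine hG _ ⟨0, ?_⟩
    rw [hsm, star_smul, hsa, hc]
    simp
  have h1 := him Complex.I (by simp)
  have h2 := him (-Complex.I) (by simp)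
  simp at h1 h2
  exact Complex.nonneg_iff.2 ⟨hre, le_antisymm h2 h1⟩

/-- The adjoint of a matrix over `S`. -/
def starMat {S : Submodule ℂ A} (h_star : ∀ a ∈ S, star a ∈ S) {n : ℕ}
    (X : Matrix (Fin n) (Fin n) S) : Matrix (Fin n) (Fin n) S :=
  Matrix.of fun i j => ⟨star (X j i : A), h_star _ (X j i).2⟩

/-- The unit of `Mₙ(S)`. -/
noncomputable def oneMat {S : Submodule ℂ A} (h_one : (1 : A) ∈ S) (n : ℕ) : Matrix (Fin n) (Fin n) S :=
  Matrix.diagonal fun _ => ⟨1, h_one⟩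

lemma matCoe_oneMat {S : Submodule ℂ A} (h_one : (1 : A) ∈ S) (n : ℕ) :
    matCoe (oneMat h_one n) = 1 := by
  ext i j
  by_cases h : i = j <;> simp [matCoe, oneMat, Matrix.diagonal_apply, Matrix.one_apply, h]

/-- A functional nonnegative on `Jₙ(S)` is real on self-adjoint matrices, since adding a large
multiple of the unit brings these into `Jₙ(S)`. -/
lemma im_eq_zero_of_selfAdjoint {S : Submodule ℂ A} (h_one : (1 : A) ∈ S) {n : ℕ}
    (G : Matrix (Fin n) (Fin n) S →ₗ[ℂ] ℂ) (hG : ∀ X, memJ X → 0 ≤ G X)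
    (Z : Matrix (Fin n) (Fin n) S) (hZ : star (matCoe Z) = matCoe Z) : (G Z).im = 0 := by
  have hZt : star (matCoe Z)ᵀ = (matCoe Z)ᵀ := by
    ext i j
    exact congrFun (congrFun hZ j) i
  have h0 : star (0 : Matrix (Fin n) (Fin n) A) = 0 := star_zero _
  obtain ⟨c₁, h1⟩ := isPosElem_add_smul_one hZ
  obtain ⟨c₂, h2⟩ := isPosElem_add_smul_one hZt
  obtain ⟨c₃, h3⟩ := isPosElem_add_smul_one h0
  obtain ⟨c, hc1, hc2, hc3⟩ : ∃ c : ℝ, c₁ ≤ c ∧ c₂ ≤ c ∧ c₃ ≤ c :=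
    ⟨max c₁ (max c₂ c₃), by simp, by simp, by simp⟩
  have hc : ∀ Y : Matrix (Fin n) (Fin n) S,
      matCoe (Y + (c : ℂ) • oneMat h_one n) = matCoe Y + (c : ℂ) • 1 := by
    intro Y
    rw [← matCoe_oneMat h_one n]
    ext i j; simp [matCoe]
  have hm0 : matCoe (0 : Matrix (Fin n) (Fin n) S) = 0 := by ext; simp [matCoe]
  have hJ1 := hG (Z + (c : ℂ) • oneMat h_one n) (by
    refine ⟨?_, ?_⟩
    · rw [hc]; exact h1 c hc1
    · rw [hc]; simpa using h2 c hc2)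
  have hJ2 := hG (0 + (c : ℂ) • oneMat h_one n) (by
    refine ⟨?_, ?_⟩
    · rw [hc, hm0]; exact h3 c hc3
    · rw [hc, hm0]; simpa using h3 c hc3)
  have e1 := (Complex.nonneg_iff.1 hJ1).2
  have e2 := (Complex.nonneg_iff.1 hJ2).2
  rw [map_add, Complex.add_im] at e1 e2
  simp only [map_zero, Complex.zero_im] at e2
  linarith

/-- If `X` and `Xᵀ` are accretive then `X + X*` lies in `Jₙ(S)`, and `re (G X)` is half of
`G (X + X*)` because `G` is real on the self-adjoint matrix `i (X - X*)`. -/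
lemma re_nonneg_of_accretive {S : Submodule ℂ A} (h_one : (1 : A) ∈ S)
    (h_star : ∀ a ∈ S, star a ∈ S) {n : ℕ}
    (G : Matrix (Fin n) (Fin n) S →ₗ[ℂ] ℂ) (hG : ∀ X, memJ X → 0 ≤ G X)
    (X : Matrix (Fin n) (Fin n) S) (h1 : X ∈ accretiveCone S n) (h2 : Xᵀ ∈ accretiveCone S n) :
    0 ≤ (G X).re := by
  have hJ := hG (X + starMat h_star X) ⟨h1, h2⟩
  have hZ := im_eq_zero_of_selfAdjoint h_one G hG (Complex.I • (X - starMat h_star X)) (by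
    ext i j
    simp [matCoe, starMat, Matrix.star_apply, ← smul_neg])
  have e := (Complex.nonneg_iff.1 hJ).1
  simp at e hZ
  linarith

lemma exists_smul_one_add_accretive {S : Submodule ℂ A} (h_one : (1 : A) ∈ S) {n : ℕ}
    (Y : Matrix (Fin n) (Fin n) S) :
    ∃ c₀ : ℝ, ∀ c : ℝ, c₀ ≤ c → c • oneMat h_one n + Y ∈ accretiveCone S n := by
  obtain ⟨c₀, h⟩ := isPosElem_add_smul_one (x := matCoe Y + star (matCoe Y))
    (by rw [star_add, star_star, add_comm])
  refine ⟨c₀ / 2, fun c hc => ?_⟩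
  have := h (2 * c) (by linarith)
  change IsPosElem _
  convert this using 1
  have e : matCoe (c • oneMat h_one n + Y) = (c : ℂ) • 1 + matCoe Y := by
    rw [← matCoe_oneMat h_one n]
    ext i j; simp [matCoe]
  rw [e, star_add, star_smul, star_one]
  simp only [RCLike.star_def, Complex.conj_ofReal, Complex.ofReal_add,
    two_mul, add_smul]
  abel

/-- `φ` is decomposable iff its dual functional is nonnegative on `Jₙ(S)`. -/
theorem decomposable_iff_dualFunc_nonneg_on_J
    (S : Submodule ℂ A) (h_one : (1 : A) ∈ S) (h_star : ∀ a ∈ S, star a ∈ S)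
    (n : ℕ) (φ : S →ₗ[ℂ] Matrix (Fin n) (Fin n) ℂ) :
    IsDecomposable φ ↔
      (∀ s : Matrix (Fin n) (Fin n) S, memJ s → 0 ≤ dualFunc φ s) := by
  constructor
  · rintro ⟨ψ, η, hψ, hη, rfl⟩ s ⟨hs, hst⟩
    have h1 := dualFunc_nonneg_of_isCPMap hψ s hs
    have h2 := dualFunc_nonneg_of_isCPMap
      (ψ := (Matrix.transposeLinearEquiv _ _ ℂ ℂ).toLinearMap ∘ₗ η) hη sᵀ hst
    have h3 : dualFunc (ψ + η) s = dualFunc ψ s +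
        dualFunc ((Matrix.transposeLinearEquiv _ _ ℂ ℂ).toLinearMap ∘ₗ η) sᵀ := by
      simp only [dualFunc, LinearMap.add_apply, Matrix.add_apply, Finset.sum_add_distrib]
      congr 1
      rw [Finset.sum_comm]
      rfl
    rw [h3]
    exact add_nonneg h1 h2
  · intro h
    let T : Matrix (Fin n) (Fin n) S ≃ₗ[ℂ] Matrix (Fin n) (Fin n) S :=
      Matrix.transposeLinearEquiv _ _ ℂ S
    obtain ⟨g₁, g₂, hg, hg₁, hg₂⟩ := exists_split (accretiveCone S n)
      ((accretiveCone S n).comap (T.toLinearMap.restrictScalars ℝ)) (dualFuncLin φ)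
      (oneMat h_one n)
      (by
        intro y₁ y₂
        obtain ⟨c₁, h1⟩ := exists_smul_one_add_accretive h_one y₁
        obtain ⟨c₂, h2⟩ := exists_smul_one_add_accretive h_one y₂ᵀ
        refine ⟨max c₁ c₂, h1 _ (le_max_left _ _), ?_⟩
        have e : (max c₁ c₂ • oneMat h_one n + y₂)ᵀ = max c₁ c₂ • oneMat h_one n + y₂ᵀ := by
          rw [Matrix.transpose_add, Matrix.transpose_smul, oneMat, Matrix.diagonal_transpose]
        change (max c₁ c₂ • oneMat h_one n + y₂)ᵀ ∈ accretiveCone S n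
        rw [e]
        exact h2 _ (le_max_right c₁ c₂))
      (fun X h1 h2 => re_nonneg_of_accretive h_one h_star (dualFuncLin φ) h X h1 h2)
    refine ⟨mapOfFunctional g₁, mapOfFunctional g₂,
      isCPMap_mapOfFunctional g₁ (nonneg_of_re_nonneg_accretive g₁ hg₁), ?_, ?_⟩
    · -- The transpose of the second map belongs to the functional `X ↦ g₂ Xᵀ`.
      have hcp := isCPMap_mapOfFunctional (g₂ ∘ₗ T.toLinearMap)
        (nonneg_of_re_nonneg_accretive _ fun X hX => hg₂ Xᵀ hX)
      have e : ∀ a, (mapOfFunctional g₂ a)ᵀ = mapOfFunctional (g₂ ∘ₗ T.toLinearMap) a := by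
        intro a
        ext i j
        simp [mapOfFunctional, T]
      intro m s hs
      simpa only [e] using hcp m s hs
    · rw [← mapOfFunctional_dualFuncLin φ, hg]
      ext x i j
      rfl
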